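/- Let p be a real polynomial in n variables, homogeneous of degree d ≥ 1, hyperbolic in direction e ∈ ℝⁿ with p(e) > 0, and suppose the hyperbolicity cone Λ₊ is regular. Then for every e' ∈ Λ₊₊: K_{e'}(√(d−1)) ⊆ Λ₊ ⊆ K_{e'}(1). -/

import Mathlib

open scoped BigOperators

/-- The univariate polynomial `t ↦ p(t • e - x)` associated to a multivariate polynomial `p`,
a direction `e` and a point `x`. -/
noncomputable def hypCharPoly {n : ℕ} (p : MvPolynomial (Fin n) ℝ) (e x : Fin n → ℝ) :
    Polynomial ℝ :=
  MvPolynomial.aeval (fun i => Polynomial.C (e i) * Polynomial.X - Polynomial.C (x i)) p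

/-- `p` is a homogeneous polynomial of degree `d`, hyperbolic in direction `e`:
`p(e) ≠ 0` and for every `x` the polynomial `t ↦ p(t • e - x)` has `d` real roots
counted with multiplicity. -/
def IsHyperbolicPoly {n : ℕ} (p : MvPolynomial (Fin n) ℝ) (e : Fin n → ℝ) (d : ℕ) : Prop :=
  p.IsHomogeneous d ∧ MvPolynomial.eval e p ≠ 0 ∧
    ∀ x : Fin n → ℝ, Multiset.card (hypCharPoly p e x).roots = d

/-- The (closed) hyperbolicity cone `Λ₊`: all hyperbolic eigenvalues are nonnegative. -/
def hypConeClosed {n : ℕ} (p : MvPolynomial (Fin n) ℝ) (e : Fin n → ℝ) : Set (Fin n → ℝ) :=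
  {x | ∀ r ∈ (hypCharPoly p e x).roots, (0:ℝ) ≤ r}

/-- The open hyperbolicity cone `Λ₊₊`: all hyperbolic eigenvalues are positive. -/
def hypConeOpen {n : ℕ} (p : MvPolynomial (Fin n) ℝ) (e : Fin n → ℝ) : Set (Fin n → ℝ) :=
  {x | ∀ r ∈ (hypCharPoly p e x).roots, (0:ℝ) < r}

/-- The gradient of `f(x) = -ln p(x)`, namely `g(x)ᵢ = -(∂ᵢ p)(x) / p(x)`. -/
noncomputable def gradNegLog {n : ℕ} (p : MvPolynomial (Fin n) ℝ) (x : Fin n → ℝ) :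
    Fin n → ℝ :=
  fun i => -(MvPolynomial.eval x (MvPolynomial.pderiv i p)) / MvPolynomial.eval x p

/-- The Hessian of `f(x) = -ln p(x)`, namely
`H(x)ᵢⱼ = (∂ᵢp)(x)(∂ⱼp)(x)/p(x)² - (∂ᵢ∂ⱼp)(x)/p(x)`. -/
noncomputable def hessNegLog {n : ℕ} (p : MvPolynomial (Fin n) ℝ) (x : Fin n → ℝ) :
    Matrix (Fin n) (Fin n) ℝ :=
  Matrix.of fun i j =>
    MvPolynomial.eval x (MvPolynomial.pderiv i p) * MvPolynomial.eval x (MvPolynomial.pderiv j p)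
        / (MvPolynomial.eval x p) ^ 2
      - MvPolynomial.eval x (MvPolynomial.pderiv i (MvPolynomial.pderiv j p))
        / MvPolynomial.eval x p

/-- The local inner product `⟨u, v⟩_{e'} = uᵀ H(e') v`. -/
noncomputable def localIP {n : ℕ} (p : MvPolynomial (Fin n) ℝ) (e' u v : Fin n → ℝ) : ℝ :=
  ∑ i, ∑ j, u i * hessNegLog p e' i j * v j

/-- The local norm `‖v‖_{e'} = ⟨v, v⟩_{e'}^{1/2}`. -/
noncomputable def localNorm {n : ℕ} (p : MvPolynomial (Fin n) ℝ) (e' v : Fin n → ℝ) : ℝ :=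
  Real.sqrt (localIP p e' v v)

/-- The closed quadratic cone `K_{e'}(α) = {x : ⟨e', x⟩_{e'} ≥ α ‖x‖_{e'}}`. -/
noncomputable def quadCone {n : ℕ} (p : MvPolynomial (Fin n) ℝ) (e' : Fin n → ℝ) (α : ℝ) :
    Set (Fin n → ℝ) :=
  {x | α * localNorm p e' x ≤ localIP p e' e' x}

/-- The hyperbolicity cone is regular: it contains no nonzero linear subspace. -/
def IsRegularCone {n : ℕ} (p : MvPolynomial (Fin n) ℝ) (e : Fin n → ℝ) : Prop :=
  ∀ W : Submodule ℝ (Fin n → ℝ), (W : Set (Fin n → ℝ)) ⊆ hypConeClosed p e → W = ⊥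

/-!
A homogeneous real polynomial `p` is hyperbolic in direction `e` exactly when `p (z e + x) ≠ 0` for
all real `x` and all `z` in the upper half plane. Fix `b` with `p b ≠ 0` and move `a` continuously
so that `t ↦ p (a + t b)` never has a real zero: no zero can cross the real axis or come from
infinity, so the absence of zeros in the upper half plane persists. Applied to paths starting from
multiples of `e`, this gives Gårding's theorem: `p` is hyperbolic in every direction `e'` of the
open cone, and the cone of `e'` is the cone of `e`.

It then suffices to treat the cone of `e'` itself. If `r` is the multiset of hyperbolic eigenvalues
of `x` with respect to `e'`, then `p (e' + t x) = p e' * ∏ (1 + t rᵢ)`, whence `⟨e', x⟩ = ∑ rᵢ` and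
`‖x‖² = ∑ rᵢ²` at `e'`. Nonnegative numbers satisfy `∑ rᵢ² ≤ (∑ rᵢ)²`, which is the second
inclusion. If some eigenvalue is negative, Cauchy–Schwarz for the remaining `d - 1` bounds `∑ rᵢ`
strictly by `√(d - 1) ‖x‖`, which is the first.
-/

open Polynomial Filter Topology

section LineRestriction

variable {σ R A : Type*} [CommSemiring R] [CommSemiring A] [Algebra R A]
  {p : MvPolynomial σ R} {d : ℕ}

theorem aeval_eq_sum_prod_toMultiset (p : MvPolynomial σ R) (v : σ → A) :
    MvPolynomial.aeval v p =
      ∑ m ∈ p.support, algebraMap R A (p.coeff m) * (m.toMultiset.map v).prod := by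
  simp only [MvPolynomial.aeval_def, MvPolynomial.eval₂_eq, Finsupp.toMultiset_map,
    Finsupp.prod_toMultiset]
  refine Finset.sum_congr rfl fun m _ => ?_
  rw [Finsupp.prod_mapDomain_index (by simp) (by simp [pow_add]), Finsupp.prod]

theorem card_toMultiset_of_isHomogeneous (hp : p.IsHomogeneous d) {m : σ →₀ ℕ}
    (hm : m ∈ p.support) : Multiset.card m.toMultiset = d := by
  rw [Finsupp.card_toMultiset, ← hp (MvPolynomial.mem_support_iff.mp hm), Finsupp.weight_apply]
  simp only [Pi.one_apply, smul_eq_mul, mul_one]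
  rfl

theorem aeval_smul_of_isHomogeneous (hp : p.IsHomogeneous d) (c : A) (v : σ → A) :
    MvPolynomial.aeval (c • v) p = c ^ d * MvPolynomial.aeval v p := by
  simp only [aeval_eq_sum_prod_toMultiset, Finset.mul_sum]
  refine Finset.sum_congr rfl fun m hm => ?_
  simp only [Pi.smul_apply, smul_eq_mul, Multiset.prod_map_mul, Multiset.map_const',
    Multiset.prod_replicate, card_toMultiset_of_isHomogeneous hp hm]
  ring

/-- The restriction `t ↦ p(a + t b)` of a multivariate polynomial to the line through `a` in the
direction `b`, as a univariate polynomial. Both the hyperbolic eigenvalues and the directional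
derivatives of `p` are read off from it. -/
noncomputable def lineRestrict (p : MvPolynomial σ R) (a b : σ → A) : A[X] :=
  MvPolynomial.aeval (fun i => C (a i) + C (b i) * X) p

theorem eval_lineRestrict (p : MvPolynomial σ R) (a b : σ → A) (t : A) :
    (lineRestrict p a b).eval t = MvPolynomial.aeval (a + t • b) p := by
  unfold lineRestrict
  induction p using MvPolynomial.induction_on with
  | C r => simp only [MvPolynomial.aeval_C, Polynomial.algebraMap_apply, eval_C]
  | add p q hp hq => simp only [map_add, eval_add, hp, hq]
  | mul_X p i hp => simp [hp, mul_comm t]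

theorem natDegree_lineRestrict_le (hp : p.IsHomogeneous d) (a b : σ → A) :
    (lineRestrict p a b).natDegree ≤ d := by
  rw [lineRestrict, aeval_eq_sum_prod_toMultiset]
  refine natDegree_sum_le_of_forall_le _ _ fun m hm => ?_
  rw [Polynomial.algebraMap_apply, ← card_toMultiset_of_isHomogeneous hp hm]
  refine (natDegree_C_mul_le _ _).trans <| (natDegree_multiset_prod_le _).trans ?_
  rw [Multiset.map_map]
  refine (Multiset.sum_le_card_nsmul _ 1 ?_).trans (by simp)
  simp only [Multiset.mem_map, Function.comp_apply]
  rintro _ ⟨i, -, rfl⟩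
  compute_degree

theorem coeff_lineRestrict (hp : p.IsHomogeneous d) (a b : σ → A) :
    (lineRestrict p a b).coeff d = MvPolynomial.aeval b p := by
  simp only [lineRestrict, aeval_eq_sum_prod_toMultiset, finsetSum_coeff]
  refine Finset.sum_congr rfl fun m hm => ?_
  have hlin : ∀ q ∈ m.toMultiset.map fun i => C (a i) + C (b i) * X, q.natDegree ≤ 1 := by
    simp only [Multiset.mem_map]
    rintro _ ⟨i, -, rfl⟩
    compute_degree
  have hcoeff := coeff_multiset_prod_of_natDegree_le _ 1 hlin
  rw [Multiset.card_map, card_toMultiset_of_isHomogeneous hp hm, mul_one] at hcoeff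
  rw [Polynomial.algebraMap_apply, coeff_C_mul, hcoeff]
  simp

end LineRestriction

section DirectionalDerivative

variable {σ R : Type*} [CommSemiring R] {p : MvPolynomial σ R} {d : ℕ}

/-- The derivative `∑ i, uᵢ ∂ᵢ` of polynomials in the constant direction `u`, in terms of which the
Hessian form of `-ln p` is expressed. -/
noncomputable def dirDeriv (u : σ → R) : Derivation R (MvPolynomial σ R) (MvPolynomial σ R) :=
  MvPolynomial.mkDerivation R fun i => MvPolynomial.C (u i)

theorem dirDeriv_X (u : σ → R) (i : σ) :
    dirDeriv u (MvPolynomial.X i) = MvPolynomial.C (u i) :=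
  MvPolynomial.mkDerivation_X _ _ _

theorem derivative_lineRestrict (p : MvPolynomial σ R) (a b : σ → R) :
    derivative (lineRestrict p a b) = lineRestrict (dirDeriv b p) a b := by
  unfold lineRestrict
  induction p using MvPolynomial.induction_on with
  | C r => simp
  | add p q hp hq => simp only [map_add, hp, hq]
  | mul_X p i hp =>
    simp only [map_mul, MvPolynomial.aeval_X, derivative_mul, hp, Derivation.leibniz, dirDeriv_X,
      smul_eq_mul, map_add, MvPolynomial.aeval_C, algebraMap_eq, derivative_C, derivative_X]
    ring

theorem dirDeriv_eq_sum [Fintype σ] (u : σ → R) (p : MvPolynomial σ R) :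
    dirDeriv u p = ∑ i, MvPolynomial.C (u i) * MvPolynomial.pderiv i p := by
  classical
  induction p using MvPolynomial.induction_on with
  | C r => simp [dirDeriv]
  | add p q hp hq => simp only [map_add, hp, hq, mul_add, Finset.sum_add_distrib]
  | mul_X p i hp =>
    simp only [Derivation.leibniz, dirDeriv_X, hp, MvPolynomial.pderiv_X, smul_eq_mul, mul_add,
      Finset.sum_add_distrib, Finset.mul_sum, Pi.single_apply]
    simp [mul_comm, mul_left_comm]

theorem eval_dirDeriv [Fintype σ] (u e : σ → R) (p : MvPolynomial σ R) :
    MvPolynomial.eval e (dirDeriv u p) =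
      ∑ i, u i * MvPolynomial.eval e (MvPolynomial.pderiv i p) := by
  simp [dirDeriv_eq_sum]

theorem isHomogeneous_dirDeriv [Finite σ] (hp : p.IsHomogeneous d) (u : σ → R) :
    (dirDeriv u p).IsHomogeneous (d - 1) := by
  cases nonempty_fintype σ
  rw [dirDeriv_eq_sum]
  exact MvPolynomial.IsHomogeneous.sum _ _ _ fun i _ => hp.pderiv.C_mul _

theorem eval_dirDeriv_self [Finite σ] (hp : p.IsHomogeneous d) (e : σ → R) :
    MvPolynomial.eval e (dirDeriv e p) = d * MvPolynomial.eval e p := by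
  cases nonempty_fintype σ
  simpa [eval_dirDeriv] using congrArg (MvPolynomial.eval e) hp.sum_X_mul_pderiv

end DirectionalDerivative

section Hyperbolic

variable {n d : ℕ} {p : MvPolynomial (Fin n) ℝ} {e x : Fin n → ℝ}

theorem hypCharPoly_eq_lineRestrict (p : MvPolynomial (Fin n) ℝ) (e x : Fin n → ℝ) :
    hypCharPoly p e x = lineRestrict p (-x) e := by
  unfold hypCharPoly lineRestrict
  congr 2
  ext1 i
  simp only [Pi.neg_apply, C_neg]
  ring

theorem natDegree_hypCharPoly (hp : p.IsHomogeneous d) (he : MvPolynomial.eval e p ≠ 0)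
    (x : Fin n → ℝ) : (hypCharPoly p e x).natDegree = d := by
  rw [hypCharPoly_eq_lineRestrict]
  refine natDegree_eq_of_le_of_coeff_ne_zero (natDegree_lineRestrict_le hp _ _) ?_
  rwa [coeff_lineRestrict hp, MvPolynomial.aeval_eq_eval]

theorem leadingCoeff_hypCharPoly (hp : p.IsHomogeneous d) (he : MvPolynomial.eval e p ≠ 0)
    (x : Fin n → ℝ) : (hypCharPoly p e x).leadingCoeff = MvPolynomial.eval e p := by
  rw [leadingCoeff, natDegree_hypCharPoly hp he, hypCharPoly_eq_lineRestrict,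
    coeff_lineRestrict hp, MvPolynomial.aeval_eq_eval]

theorem aeval_hypCharPoly {A : Type*} [CommRing A] [Algebra ℝ A] (p : MvPolynomial (Fin n) ℝ)
    (e x : Fin n → ℝ) (z : A) :
    aeval z (hypCharPoly p e x) =
      MvPolynomial.aeval (z • (algebraMap ℝ A ∘ e) - algebraMap ℝ A ∘ x) p := by
  rw [hypCharPoly, MvPolynomial.comp_aeval_apply]
  congr 2
  ext i
  simp only [map_sub, map_mul, aeval_C, aeval_X, Pi.sub_apply, Pi.smul_apply, Function.comp_apply,
    smul_eq_mul, mul_comm z]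

theorem aeval_algebraMap_comp {A : Type*} [CommRing A] [Algebra ℝ A]
    (p : MvPolynomial (Fin n) ℝ) (x : Fin n → ℝ) :
    MvPolynomial.aeval (algebraMap ℝ A ∘ x) p = algebraMap ℝ A (MvPolynomial.eval x p) := by
  rw [← MvPolynomial.coe_aeval_eq_eval]
  exact MvPolynomial.aeval_algebraMap_apply A x p

namespace IsHyperbolicPoly

theorem aeval_hypCharPoly_eq_prod {A : Type*} [CommRing A] [Algebra ℝ A]
    (hp : IsHyperbolicPoly p e d) (x : Fin n → ℝ) (z : A) :
    aeval z (hypCharPoly p e x) = algebraMap ℝ A (MvPolynomial.eval e p) *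
      ((hypCharPoly p e x).roots.map fun r => z - algebraMap ℝ A r).prod := by
  have hcard : Multiset.card (hypCharPoly p e x).roots = (hypCharPoly p e x).natDegree := by
    rw [hp.2.2, natDegree_hypCharPoly hp.1 hp.2.1]
  conv_lhs => rw [← C_leadingCoeff_mul_prod_multiset_X_sub_C hcard]
  simp [leadingCoeff_hypCharPoly hp.1 hp.2.1, map_multiset_prod, Multiset.map_map]

theorem aeval_smul_add_smul {K : Type*} [Field K] [Algebra ℝ K] (hp : IsHyperbolicPoly p e d)
    (x : Fin n → ℝ) (z w : K) :
    MvPolynomial.aeval (z • (algebraMap ℝ K ∘ e) + w • (algebraMap ℝ K ∘ x)) p =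
      algebraMap ℝ K (MvPolynomial.eval e p) *
        ((hypCharPoly p e x).roots.map fun r => z + w * algebraMap ℝ K r).prod := by
  rcases eq_or_ne w 0 with rfl | hw
  · simp [aeval_smul_of_isHomogeneous hp.1, aeval_algebraMap_comp, hp.2.2, mul_comm]
  have hscale : z • (algebraMap ℝ K ∘ e) + w • (algebraMap ℝ K ∘ x) =
      (-w) • ((-z / w) • (algebraMap ℝ K ∘ e) - algebraMap ℝ K ∘ x) := by
    ext i
    simp only [Pi.add_apply, Pi.sub_apply, Pi.smul_apply, smul_eq_mul]
    field_simp
    ring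
  have hprod : ((hypCharPoly p e x).roots.map fun r => z + w * algebraMap ℝ K r).prod =
      (-w) ^ d * ((hypCharPoly p e x).roots.map fun r => -z / w - algebraMap ℝ K r).prod := by
    rw [← hp.2.2 x, ← Multiset.prod_replicate, ← Multiset.map_const', ← Multiset.prod_map_mul]
    congr 2
    ext r
    field_simp
    ring
  rw [hscale, aeval_smul_of_isHomogeneous hp.1, ← aeval_hypCharPoly,
    hp.aeval_hypCharPoly_eq_prod, hprod]
  ring

theorem aeval_smul_add_smul_eq_zero_iff {K : Type*} [Field K] [Algebra ℝ K]
    (hp : IsHyperbolicPoly p e d) (x : Fin n → ℝ) (z w : K) :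
    MvPolynomial.aeval (z • (algebraMap ℝ K ∘ e) + w • (algebraMap ℝ K ∘ x)) p = 0 ↔
      ∃ r ∈ (hypCharPoly p e x).roots, z + w * algebraMap ℝ K r = 0 := by
  simp [hp.aeval_smul_add_smul, hp.2.1, Multiset.prod_eq_zero_iff]

theorem eval_smul_add_smul_eq_zero_iff (hp : IsHyperbolicPoly p e d) (x : Fin n → ℝ) (z w : ℝ) :
    MvPolynomial.eval (z • e + w • x) p = 0 ↔
      ∃ r ∈ (hypCharPoly p e x).roots, z + w * r = 0 := by
  have h := hp.aeval_smul_add_smul_eq_zero_iff x z w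
  rwa [MvPolynomial.aeval_eq_eval] at h

theorem eval_add_smul_eq_zero_iff (hp : IsHyperbolicPoly p e d) (x : Fin n → ℝ) (t : ℝ) :
    MvPolynomial.eval (x + t • e) p = 0 ↔ -t ∈ (hypCharPoly p e x).roots := by
  rw [show x + t • e = t • e + (1 : ℝ) • x by module, hp.eval_smul_add_smul_eq_zero_iff]
  simp [add_eq_zero_iff_neg_eq]

theorem mem_hypConeClosed_iff (hp : IsHyperbolicPoly p e d) :
    x ∈ hypConeClosed p e ↔ ∀ t : ℝ, 0 < t → MvPolynomial.eval (x + t • e) p ≠ 0 := by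
  simp only [Ne, hp.eval_add_smul_eq_zero_iff]
  exact ⟨fun h t ht ht' => by linarith [h _ ht'],
    fun h r hr => not_lt.mp fun hr' => h (-r) (by linarith) (by rwa [neg_neg])⟩

theorem mem_hypConeOpen_iff (hp : IsHyperbolicPoly p e d) :
    x ∈ hypConeOpen p e ↔ ∀ t : ℝ, 0 ≤ t → MvPolynomial.eval (x + t • e) p ≠ 0 := by
  simp only [Ne, hp.eval_add_smul_eq_zero_iff]
  exact ⟨fun h t ht ht' => by linarith [h _ ht'],
    fun h r hr => not_le.mp fun hr' => h (-r) (by linarith) (by rwa [neg_neg])⟩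

theorem add_smul_mem_hypConeOpen (hp : IsHyperbolicPoly p e d) (hx : x ∈ hypConeClosed p e)
    {t : ℝ} (ht : 0 < t) : x + t • e ∈ hypConeOpen p e := by
  refine hp.mem_hypConeOpen_iff.mpr fun s hs => ?_
  rw [add_assoc, ← add_smul]
  exact hp.mem_hypConeClosed_iff.mp hx _ (by linarith)

theorem exists_sub_smul_mem_hypConeOpen (hp : IsHyperbolicPoly p e d)
    (hx : x ∈ hypConeOpen p e) : ∃ c : ℝ, 0 < c ∧ x - c • e ∈ hypConeOpen p e := by
  have hsmall : ∀ᶠ c in 𝓝[>] (0 : ℝ), ∀ r ∈ (hypCharPoly p e x).roots.toFinset, c < r :=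
    (eventually_all_finset _).mpr fun r hr =>
      nhdsWithin_le_nhds (eventually_lt_nhds (hx r (Multiset.mem_toFinset.mp hr)))
  obtain ⟨c, hcr, hc⟩ := (hsmall.and self_mem_nhdsWithin).exists
  refine ⟨c, hc, hp.mem_hypConeOpen_iff.mpr fun t ht hzero => ?_⟩
  rw [show x - c • e + t • e = x + (t - c) • e by module, hp.eval_add_smul_eq_zero_iff] at hzero
  linarith [hcr _ (Multiset.mem_toFinset.mpr hzero)]

theorem eval_ne_zero_of_mem_hypConeOpen (hp : IsHyperbolicPoly p e d)
    (hx : x ∈ hypConeOpen p e) : MvPolynomial.eval x p ≠ 0 := by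
  simpa using hp.mem_hypConeOpen_iff.mp hx 0 le_rfl

end IsHyperbolicPoly

theorem isHyperbolicPoly_of_forall_aeval_ne_zero (hp : p.IsHomogeneous d)
    (he : MvPolynomial.eval e p ≠ 0)
    (h : ∀ (x : Fin n → ℝ) (z : ℂ), 0 < z.im →
      MvPolynomial.aeval (z • (algebraMap ℝ ℂ ∘ e) + algebraMap ℝ ℂ ∘ x) p ≠ 0) :
    IsHyperbolicPoly p e d := by
  refine ⟨hp, he, fun x => ?_⟩
  rw [← natDegree_hypCharPoly hp he x, ← splits_iff_card_roots]
  refine Splits.of_splits_map (algebraMap ℝ ℂ) (IsAlgClosed.splits _) fun z hz => ?_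
  have hroot : MvPolynomial.aeval (z • (algebraMap ℝ ℂ ∘ e) - algebraMap ℝ ℂ ∘ x) p = 0 := by
    rw [← aeval_hypCharPoly, ← eval_map_algebraMap]
    exact (mem_roots'.mp hz).2
  have hupper : ¬ 0 < z.im := fun hpos => h (-x) z hpos <| by
    rw [← hroot]
    congr 2
    ext i
    simp [sub_eq_add_neg]
  have hlower : ¬ z.im < 0 := fun hneg => h x (-z) (by simpa using hneg) <| by
    rw [show -z • (algebraMap ℝ ℂ ∘ e) + algebraMap ℝ ℂ ∘ x =
        (-1 : ℂ) • (z • (algebraMap ℝ ℂ ∘ e) - algebraMap ℝ ℂ ∘ x) by module,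
      aeval_smul_of_isHomogeneous hp, hroot, mul_zero]
  have hreal : z.im = 0 := le_antisymm (not_lt.mp hupper) (not_lt.mp hlower)
  exact ⟨z.re, Complex.ext (by simp) (by simp [hreal])⟩

end Hyperbolic

section UpperHalfPlane

variable {σ R : Type*} [CommSemiring R] [Algebra R ℂ] {p : MvPolynomial σ R} {d : ℕ}
  {b : σ → ℂ}

theorem norm_eval_re_le_norm_eval {q : ℂ[X]} (hq : ∀ t : ℂ, 0 ≤ t.im → q.eval t ≠ 0) {t : ℂ}
    (ht : 0 ≤ t.im) : ‖q.eval (t.re : ℂ)‖ ≤ ‖q.eval t‖ := by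
  have hroots : ∀ r ∈ q.roots, ‖(t.re : ℂ) - r‖ ≤ ‖t - r‖ := by
    intro r hr
    have him : r.im < 0 := not_le.mp fun h => hq r h (isRoot_of_mem_roots hr)
    rw [Complex.norm_def, Complex.norm_def]
    refine Real.sqrt_le_sqrt ?_
    simp only [Complex.normSq_apply, Complex.sub_re, Complex.sub_im, Complex.ofReal_re,
      Complex.ofReal_im]
    nlinarith
  rw [(IsAlgClosed.splits q).eval_eq_prod_roots, (IsAlgClosed.splits q).eval_eq_prod_roots]
  have hnorm : ∀ u : ℂ, ‖(q.roots.map fun r => u - r).prod‖ =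
      (q.roots.map fun r => ‖u - r‖).prod := fun u => by
    simpa using map_multiset_prod (normHom (α := ℂ)) (q.roots.map fun r => u - r)
  rw [norm_mul, norm_mul, hnorm, hnorm]
  exact mul_le_mul_of_nonneg_left
    (Multiset.prod_map_le_prod_map₀ _ _ (fun r _ => norm_nonneg _) hroots) (norm_nonneg _)

theorem continuous_aeval_complex (p : MvPolynomial σ R) :
    Continuous fun v : σ → ℂ => MvPolynomial.aeval v p := by
  simp only [MvPolynomial.aeval_def, ← MvPolynomial.eval_map]
  exact MvPolynomial.continuous_eval _

/-- The points `a` for which `t ↦ p(a + t b)` has no zeros in the closed upper half plane.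
This is the condition followed along deformations of `a` in the proof of Gårding's theorem. -/
def upperZeroFree (p : MvPolynomial σ R) (b : σ → ℂ) : Set (σ → ℂ) :=
  {a | ∀ t : ℂ, 0 ≤ t.im → MvPolynomial.aeval (a + t • b) p ≠ 0}

theorem neg_inv_im_nonneg {t : ℂ} (ht : 0 ≤ t.im) : 0 ≤ (-t⁻¹).im := by
  rw [Complex.neg_im, Complex.inv_im, neg_div, neg_neg]
  exact div_nonneg ht (Complex.normSq_nonneg t)

-- The zeros with `‖t‖ ≥ 1` are brought into the unit disc by `t ↦ -t⁻¹`, which preserves the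
-- upper half plane; this makes the condition one over a compact set.
theorem mem_upperZeroFree_iff_forall_closedBall (hp : p.IsHomogeneous d)
    (hb : MvPolynomial.aeval b p ≠ 0) {a : σ → ℂ} :
    a ∈ upperZeroFree p b ↔ ∀ t ∈ Metric.closedBall (0 : ℂ) 1 ∩ {t | 0 ≤ t.im},
      MvPolynomial.aeval (a + t • b) p ≠ 0 ∧ MvPolynomial.aeval (t • a - b) p ≠ 0 := by
  have hinv : ∀ t : ℂ, t ≠ 0 → t • a - b = t • (a + (-t⁻¹) • b) := fun t ht => by
    simp [smul_smul, ht, sub_eq_add_neg]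
  constructor
  · rintro ha t ⟨-, ht⟩
    refine ⟨ha t ht, ?_⟩
    rcases eq_or_ne t 0 with rfl | ht0
    · rw [show (0 : ℂ) • a - b = (-1 : ℂ) • b by simp, aeval_smul_of_isHomogeneous hp]
      simp [hb]
    · rw [hinv t ht0, aeval_smul_of_isHomogeneous hp]
      exact mul_ne_zero (pow_ne_zero _ ht0) (ha _ (neg_inv_im_nonneg ht))
  · intro h t ht hzero
    rcases le_total ‖t‖ 1 with hle | hge
    · exact (h t ⟨by simpa using hle, ht⟩).1 hzero
    · have ht0 : t ≠ 0 := norm_pos_iff.mp (one_pos.trans_le hge)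
      refine (h (-t⁻¹) ⟨by simpa using inv_le_one_of_one_le₀ hge, neg_inv_im_nonneg ht⟩).2 ?_
      rw [hinv _ (by simpa using ht0), aeval_smul_of_isHomogeneous hp]
      simp [hzero, inv_neg]

theorem isOpen_upperZeroFree (hp : p.IsHomogeneous d) (hb : MvPolynomial.aeval b p ≠ 0) :
    IsOpen (upperZeroFree p b) := by
  have hK : IsCompact (Metric.closedBall (0 : ℂ) 1 ∩ {t | 0 ≤ t.im}) :=
    (isCompact_closedBall 0 1).inter_right (isClosed_le continuous_const Complex.continuous_im)
  refine isOpen_iff_mem_nhds.mpr fun a ha => ?_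
  rw [mem_upperZeroFree_iff_forall_closedBall hp hb] at ha
  have hcont : Continuous fun q : (σ → ℂ) × ℂ => MvPolynomial.aeval (q.1 + q.2 • b) p :=
    (continuous_aeval_complex p).comp (continuous_fst.add (continuous_snd.smul continuous_const))
  have hcont_inv : Continuous fun q : (σ → ℂ) × ℂ => MvPolynomial.aeval (q.2 • q.1 - b) p :=
    (continuous_aeval_complex p).comp ((continuous_snd.smul continuous_fst).sub continuous_const)
  have hnear : ∀ t ∈ Metric.closedBall (0 : ℂ) 1 ∩ {t | 0 ≤ t.im}, ∀ᶠ q in 𝓝 (a, t),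
      MvPolynomial.aeval (q.1 + q.2 • b) p ≠ 0 ∧ MvPolynomial.aeval (q.2 • q.1 - b) p ≠ 0 :=
    fun t ht => ((hcont.tendsto (a, t)).eventually_ne (ha t ht).1).and
      ((hcont_inv.tendsto (a, t)).eventually_ne (ha t ht).2)
  refine (hK.eventually_forall_of_forall_eventually (P := fun a' t =>
    MvPolynomial.aeval (a' + t • b) p ≠ 0 ∧ MvPolynomial.aeval (t • a' - b) p ≠ 0) hnear).mono
    fun a' ha' => ?_
  exact (mem_upperZeroFree_iff_forall_closedBall hp hb).mpr ha'

theorem mem_upperZeroFree_iff_norm_le {a : σ → ℂ}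
    (ha : ∀ t : ℝ, MvPolynomial.aeval (a + (t : ℂ) • b) p ≠ 0) :
    a ∈ upperZeroFree p b ↔ ∀ t : ℂ, 0 ≤ t.im →
      ‖MvPolynomial.aeval (a + (t.re : ℂ) • b) p‖ ≤ ‖MvPolynomial.aeval (a + t • b) p‖ := by
  refine ⟨fun h t ht => ?_, fun h t ht => ?_⟩
  · simp only [upperZeroFree, Set.mem_ofPred_eq, ← eval_lineRestrict] at h ⊢
    exact norm_eval_re_le_norm_eval h ht
  · exact norm_pos_iff.mp ((norm_pos_iff.mpr (ha t.re)).trans_le (h t ht))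

-- The norm inequality is a closed condition on `a`, whereas having no zeros is an open one.
theorem mem_upperZeroFree_of_preconnected {S : Type*} [TopologicalSpace S] [PreconnectedSpace S]
    (hp : p.IsHomogeneous d) (hb : MvPolynomial.aeval b p ≠ 0) {a : S → σ → ℂ}
    (ha : Continuous a) (hreal : ∀ s (t : ℝ), MvPolynomial.aeval (a s + (t : ℂ) • b) p ≠ 0)
    {s₀ : S} (h₀ : a s₀ ∈ upperZeroFree p b) (s : S) : a s ∈ upperZeroFree p b := by
  have hcont : ∀ t : ℂ, Continuous fun s => ‖MvPolynomial.aeval (a s + t • b) p‖ := fun t =>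
    ((continuous_aeval_complex p).comp (ha.add continuous_const)).norm
  have hclosed : IsClosed (a ⁻¹' upperZeroFree p b) := by
    have hset : a ⁻¹' upperZeroFree p b = ⋂ (t : ℂ) (_ : 0 ≤ t.im), {s |
        ‖MvPolynomial.aeval (a s + (t.re : ℂ) • b) p‖ ≤ ‖MvPolynomial.aeval (a s + t • b) p‖} := by
      ext s
      simp only [Set.mem_preimage, mem_upperZeroFree_iff_norm_le (hreal s), Set.mem_iInter,
        Set.mem_ofPred_eq]
    rw [hset]
    exact isClosed_iInter fun t => isClosed_iInter fun _ => isClosed_le (hcont _) (hcont t)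
  have hclopen : IsClopen (a ⁻¹' upperZeroFree p b) :=
    ⟨hclosed, (isOpen_upperZeroFree hp hb).preimage ha⟩
  exact Set.eq_univ_iff_forall.mp (hclopen.eq_univ ⟨s₀, h₀⟩) s

end UpperHalfPlane

section Garding

variable {n d : ℕ} {p : MvPolynomial (Fin n) ℝ} {e e' x : Fin n → ℝ}

namespace IsHyperbolicPoly

theorem aeval_smul_add_ne_zero (hp : IsHyperbolicPoly p e d) (x : Fin n → ℝ) {z : ℂ}
    (hz : z.im ≠ 0) :
    MvPolynomial.aeval (z • (algebraMap ℝ ℂ ∘ e) + algebraMap ℝ ℂ ∘ x) p ≠ 0 := by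
  rw [← one_smul ℂ (algebraMap ℝ ℂ ∘ x), Ne, hp.aeval_smul_add_smul_eq_zero_iff]
  rintro ⟨r, -, hr⟩
  exact hz (by simpa using congrArg Complex.im hr)

theorem smul_mem_upperZeroFree (hp : IsHyperbolicPoly p e d) (he' : e' ∈ hypConeOpen p e) {z : ℂ}
    (hz : 0 < z.im) : z • (algebraMap ℝ ℂ ∘ e) ∈ upperZeroFree p (algebraMap ℝ ℂ ∘ e') := by
  intro t ht
  rw [Ne, hp.aeval_smul_add_smul_eq_zero_iff]
  rintro ⟨r, hr, hzero⟩
  have him : z.im + t.im * r = 0 := by simpa using congrArg Complex.im hzero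
  linarith [mul_nonneg ht (he' r hr).le]

theorem aeval_algebraMap_comp_ne_zero (hp : IsHyperbolicPoly p e d) (hx : x ∈ hypConeOpen p e) :
    MvPolynomial.aeval (algebraMap ℝ ℂ ∘ x) p ≠ 0 := by
  rw [aeval_algebraMap_comp]
  exact (_root_.map_ne_zero _).mpr (hp.eval_ne_zero_of_mem_hypConeOpen hx)

theorem smul_add_mem_upperZeroFree (hp : IsHyperbolicPoly p e d) (he' : e' ∈ hypConeOpen p e)
    (y : Fin n → ℝ) {z : ℂ} (hz : 0 < z.im) :
    z • (algebraMap ℝ ℂ ∘ e) + algebraMap ℝ ℂ ∘ y ∈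
      upperZeroFree p (algebraMap ℝ ℂ ∘ e') := by
  have key := mem_upperZeroFree_of_preconnected hp.1 (hp.aeval_algebraMap_comp_ne_zero he')
    (a := fun s : ℝ => z • (algebraMap ℝ ℂ ∘ e) + (s : ℂ) • (algebraMap ℝ ℂ ∘ y))
    (by fun_prop) (fun s t => ?_) (s₀ := 0) (by simpa using hp.smul_mem_upperZeroFree he' hz) 1
  · simpa using key
  · convert hp.aeval_smul_add_ne_zero (s • y + t • e') hz.ne' using 2
    ext i
    simp [add_assoc]

theorem of_mem_hypConeOpen (hp : IsHyperbolicPoly p e d) (he' : e' ∈ hypConeOpen p e) :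
    IsHyperbolicPoly p e' d := by
  obtain ⟨c, hc, hce⟩ := hp.exists_sub_smul_mem_hypConeOpen he'
  refine isHyperbolicPoly_of_forall_aeval_ne_zero hp.1 (hp.eval_ne_zero_of_mem_hypConeOpen he')
    fun x z hz => ?_
  have hzc : 0 < (z * c).im := by simpa using mul_pos hz hc
  have hsplit : z • (algebraMap ℝ ℂ ∘ e') =
      (z * c) • (algebraMap ℝ ℂ ∘ e) + z • (algebraMap ℝ ℂ ∘ (e' - c • e)) := by
    ext i
    simp only [Complex.coe_algebraMap, Pi.add_apply, Pi.sub_apply, Pi.smul_apply,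
      Function.comp_apply, smul_eq_mul, Complex.ofReal_sub, Complex.ofReal_mul]
    ring
  rw [hsplit, add_right_comm]
  exact hp.smul_add_mem_upperZeroFree hce x hzc z hz.le

theorem one_sub_smul_add_smul_mem_hypConeOpen (hp : IsHyperbolicPoly p e d)
    (hx : x ∈ hypConeOpen p e) {s : ℝ} (hs₀ : 0 ≤ s) (hs₁ : s ≤ 1) :
    (1 - s) • e + s • x ∈ hypConeOpen p e := by
  refine hp.mem_hypConeOpen_iff.mpr fun t ht => ?_
  rw [show (1 - s) • e + s • x + t • e = (1 - s + t) • e + s • x by module, Ne,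
    hp.eval_smul_add_smul_eq_zero_iff]
  rintro ⟨r, hr, hzero⟩
  rcases hs₀.eq_or_lt with rfl | hs
  · linarith
  · linarith [mul_pos hs (hx r hr)]

-- The factor `I` removes the real zeros along the path: each point of the path is itself a
-- direction of hyperbolicity, and `I` is not real. By homogeneity, `t = I * τ` gives back
-- `p (x + τ e')`.
theorem hypConeOpen_subset (hp : IsHyperbolicPoly p e d) (he' : e' ∈ hypConeOpen p e) :
    hypConeOpen p e ⊆ hypConeOpen p e' := by
  intro x hx
  let path : unitInterval → Fin n → ℝ := fun s => (1 - (s : ℝ)) • e + (s : ℝ) • x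
  have hpath : ∀ s, path s ∈ hypConeOpen p e := fun s =>
    hp.one_sub_smul_add_smul_mem_hypConeOpen hx s.2.1 s.2.2
  have key := mem_upperZeroFree_of_preconnected hp.1 (hp.aeval_algebraMap_comp_ne_zero he')
    (a := fun s => Complex.I • (algebraMap ℝ ℂ ∘ path s)) ?_ (fun s t => ?_) (s₀ := 0) ?_ 1
  · refine (hp.of_mem_hypConeOpen he').mem_hypConeOpen_iff.mpr fun t ht hzero =>
      key (Complex.I * t) (by simpa using ht) ?_
    have hone : algebraMap ℝ ℂ ∘ path 1 + (t : ℂ) • (algebraMap ℝ ℂ ∘ e') =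
        algebraMap ℝ ℂ ∘ (x + t • e') := by
      ext i
      simp [path]
    rw [mul_smul, ← smul_add, aeval_smul_of_isHomogeneous hp.1, hone, aeval_algebraMap_comp, hzero,
      map_zero, mul_zero]
  · simp only [path]
    fun_prop
  · convert (hp.of_mem_hypConeOpen (hpath s)).aeval_smul_add_ne_zero (t • e')
      (z := Complex.I) (by simp) using 2
    ext i
    simp
  · simpa [path] using hp.smul_mem_upperZeroFree he' (z := Complex.I) (by simp)

theorem hypConeClosed_subset (hp : IsHyperbolicPoly p e d) (he' : e' ∈ hypConeOpen p e) :
    hypConeClosed p e ⊆ hypConeClosed p e' := by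
  intro x hx
  obtain ⟨c, hc, hce⟩ := hp.exists_sub_smul_mem_hypConeOpen he'
  refine (hp.of_mem_hypConeOpen he').mem_hypConeClosed_iff.mpr fun t ht => ?_
  have hx' := hp.hypConeOpen_subset hce (hp.add_smul_mem_hypConeOpen hx (mul_pos ht hc))
  rw [show x + t • e' = x + (t * c) • e + t • (e' - c • e) by module]
  exact (hp.of_mem_hypConeOpen hce).mem_hypConeOpen_iff.mp hx' t ht.le

theorem self_mem_hypConeOpen (hp : IsHyperbolicPoly p e d) : e ∈ hypConeOpen p e := by
  refine hp.mem_hypConeOpen_iff.mpr fun t ht => ?_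
  have hscale := aeval_smul_of_isHomogeneous hp.1 (1 + t) e
  rw [MvPolynomial.aeval_eq_eval] at hscale
  rw [show e + t • e = (1 + t) • e by module]
  exact hscale ▸ mul_ne_zero (by positivity) hp.2.1

theorem hypConeClosed_eq (hp : IsHyperbolicPoly p e d) (he' : e' ∈ hypConeOpen p e) :
    hypConeClosed p e' = hypConeClosed p e :=
  ((hp.of_mem_hypConeOpen he').hypConeClosed_subset
    (hp.hypConeOpen_subset he' hp.self_mem_hypConeOpen)).antisymm (hp.hypConeClosed_subset he')

end IsHyperbolicPoly

end Garding

section LocalGeometry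

variable {n d : ℕ} {p : MvPolynomial (Fin n) ℝ} {e : Fin n → ℝ}

theorem localIP_eq_dirDeriv (p : MvPolynomial (Fin n) ℝ) (e u v : Fin n → ℝ) :
    localIP p e u v =
      MvPolynomial.eval e (dirDeriv u p) * MvPolynomial.eval e (dirDeriv v p) /
          MvPolynomial.eval e p ^ 2 -
        MvPolynomial.eval e (dirDeriv u (dirDeriv v p)) / MvPolynomial.eval e p := by
  have hsecond : MvPolynomial.eval e (dirDeriv u (dirDeriv v p)) = ∑ i, ∑ j,
      u i * (v j * MvPolynomial.eval e (MvPolynomial.pderiv i (MvPolynomial.pderiv j p))) := by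
    rw [eval_dirDeriv u]
    simp only [dirDeriv_eq_sum v, map_sum, MvPolynomial.pderiv_C_mul, map_mul,
      MvPolynomial.eval_C, Finset.mul_sum]
  rw [hsecond, eval_dirDeriv u, eval_dirDeriv v, Finset.sum_mul_sum]
  simp only [Finset.sum_div, ← Finset.sum_sub_distrib, localIP, hessNegLog, Matrix.of_apply]
  refine Finset.sum_congr rfl fun i _ => Finset.sum_congr rfl fun j _ => ?_
  ring

theorem eval_zero_prod_one_add {R : Type*} [CommSemiring R] (m : Multiset R) :
    (m.map fun r => 1 + C r * X).prod.eval 0 = 1 := by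
  simp [eval_multiset_prod, Multiset.map_map]

theorem eval_zero_derivative_prod_one_add {R : Type*} [CommSemiring R] (m : Multiset R) :
    (derivative (m.map fun r => 1 + C r * X).prod).eval 0 = m.sum := by
  induction m using Multiset.induction_on with
  | empty => simp
  | cons r m ih => simp [ih, eval_zero_prod_one_add]

theorem eval_zero_derivative_derivative_prod_one_add {R : Type*} [CommRing R] (m : Multiset R) :
    (derivative (derivative (m.map fun r => 1 + C r * X).prod)).eval 0 =
      m.sum ^ 2 - (m.map fun r => r ^ 2).sum := by
  induction m using Multiset.induction_on with
  | empty => simp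
  | cons r m ih =>
    simp only [Multiset.map_cons, Multiset.prod_cons, Multiset.sum_cons, derivative_mul,
      derivative_add, derivative_one, derivative_C, derivative_X, zero_mul, mul_one, zero_add,
      eval_add, eval_mul, eval_C, eval_one, eval_X, mul_zero, add_zero, one_mul, ih,
      eval_zero_derivative_prod_one_add]
    ring

namespace IsHyperbolicPoly

theorem lineRestrict_eq_prod (hp : IsHyperbolicPoly p e d) (x : Fin n → ℝ) :
    lineRestrict p e x = C (MvPolynomial.eval e p) *
      ((hypCharPoly p e x).roots.map fun r => 1 + C r * X).prod := by
  refine Polynomial.funext fun t => ?_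
  have h := hp.aeval_smul_add_smul x (1 : ℝ) t
  rw [one_smul] at h
  rw [eval_lineRestrict]
  refine h.trans ?_
  simp [eval_multiset_prod, Multiset.map_map, mul_comm t]

theorem eval_dirDeriv_eq_sum_roots (hp : IsHyperbolicPoly p e d) (x : Fin n → ℝ) :
    MvPolynomial.eval e (dirDeriv x p) =
      MvPolynomial.eval e p * (hypCharPoly p e x).roots.sum := by
  rw [← eval_zero_derivative_prod_one_add, ← eval_C_mul, ← derivative_C_mul,
    ← hp.lineRestrict_eq_prod, derivative_lineRestrict, eval_lineRestrict, zero_smul, add_zero,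
    MvPolynomial.aeval_eq_eval]

theorem eval_dirDeriv_dirDeriv_eq_sum_roots (hp : IsHyperbolicPoly p e d) (x : Fin n → ℝ) :
    MvPolynomial.eval e (dirDeriv x (dirDeriv x p)) = MvPolynomial.eval e p *
      ((hypCharPoly p e x).roots.sum ^ 2 - ((hypCharPoly p e x).roots.map fun r => r ^ 2).sum) := by
  rw [← eval_zero_derivative_derivative_prod_one_add, ← eval_C_mul, ← derivative_C_mul,
    ← derivative_C_mul, ← hp.lineRestrict_eq_prod, derivative_lineRestrict,
    derivative_lineRestrict, eval_lineRestrict, zero_smul, add_zero, MvPolynomial.aeval_eq_eval]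

theorem localIP_self (hp : IsHyperbolicPoly p e d) (x : Fin n → ℝ) :
    localIP p e x x = ((hypCharPoly p e x).roots.map fun r => r ^ 2).sum := by
  have he := hp.2.1
  rw [localIP_eq_dirDeriv, hp.eval_dirDeriv_eq_sum_roots, hp.eval_dirDeriv_dirDeriv_eq_sum_roots]
  field_simp
  ring

theorem localIP_direction (hp : IsHyperbolicPoly p e d) (hd : 1 ≤ d) (x : Fin n → ℝ) :
    localIP p e e x = (hypCharPoly p e x).roots.sum := by
  have he := hp.2.1
  rw [localIP_eq_dirDeriv, eval_dirDeriv_self hp.1,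
    eval_dirDeriv_self (isHomogeneous_dirDeriv hp.1 x), hp.eval_dirDeriv_eq_sum_roots,
    Nat.cast_pred hd]
  field_simp
  ring

end IsHyperbolicPoly

end LocalGeometry

section MultisetInequalities

variable {R : Type*} [CommRing R] [LinearOrder R] [IsStrictOrderedRing R]

theorem sq_multiset_sum_le_card_mul_sum_sq (m : Multiset R) :
    m.sum ^ 2 ≤ Multiset.card m * (m.map fun r => r ^ 2).sum := by
  classical
  rw [Multiset.sum_eq_sum_coe m, ← m.map_univ (fun r => r ^ 2)]
  simpa using sq_sum_le_card_mul_sum_sq (s := Finset.univ) (f := fun x : m => x.1)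

theorem multiset_sum_sq_le_sq_sum {m : Multiset R} (hm : ∀ r ∈ m, 0 ≤ r) :
    (m.map fun r => r ^ 2).sum ≤ m.sum ^ 2 := by
  classical
  rw [Multiset.sum_eq_sum_coe m, ← m.map_univ (fun r => r ^ 2)]
  exact Finset.sum_sq_le_sq_sum_of_nonneg fun x _ => hm _ Multiset.coe_mem

theorem nonneg_of_sqrt_card_sub_one_mul_sqrt_le_sum {m : Multiset ℝ}
    (hm : √((Multiset.card m : ℝ) - 1) * √(m.map fun r => r ^ 2).sum ≤ m.sum) :
    ∀ r ∈ m, 0 ≤ r := by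
  intro r hr
  by_contra! hneg
  obtain ⟨m, rfl⟩ := Multiset.exists_cons_of_mem hr
  rw [Multiset.map_cons, Multiset.sum_cons, Multiset.sum_cons, Multiset.card_cons, Nat.cast_succ,
    add_sub_cancel_right, ← Real.sqrt_mul (Nat.cast_nonneg _)] at hm
  have hcauchy : m.sum ≤ √(Multiset.card m * (r ^ 2 + (m.map fun r => r ^ 2).sum)) := by
    refine Real.le_sqrt_of_sq_le ((sq_multiset_sum_le_card_mul_sum_sq m).trans ?_)
    gcongr
    exact le_add_of_nonneg_left (sq_nonneg r)
  linarith

end MultisetInequalities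

theorem stmt8_general {n d : ℕ} (hd : 1 ≤ d) {p : MvPolynomial (Fin n) ℝ} {e : Fin n → ℝ}
    (hp : IsHyperbolicPoly p e d) :
    ∀ e' ∈ hypConeOpen p e,
      quadCone p e' (Real.sqrt ((d : ℝ) - 1)) ⊆ hypConeClosed p e ∧
      hypConeClosed p e ⊆ quadCone p e' 1 := by
  intro e' he'
  have hp' := hp.of_mem_hypConeOpen he'
  rw [← hp.hypConeClosed_eq he']
  refine ⟨fun x hx => nonneg_of_sqrt_card_sub_one_mul_sqrt_le_sum ?_, fun x hx => ?_⟩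
  · rw [hp'.2.2 x, ← hp'.localIP_self, ← hp'.localIP_direction hd]
    exact hx
  · change 1 * √(localIP p e' x x) ≤ localIP p e' e' x
    rw [one_mul, hp'.localIP_self, hp'.localIP_direction hd]
    exact Real.sqrt_le_iff.mpr ⟨Multiset.sum_nonneg hx, multiset_sum_sq_le_sq_sum hx⟩

/-- Proposition 8.9 in RS14.
For every `e' ∈ Λ₊₊`: `K_{e'}(√(d-1)) ⊆ Λ₊ ⊆ K_{e'}(1)`. -/
theorem stmt8 {n d : ℕ} (hd : 1 ≤ d) (p : MvPolynomial (Fin n) ℝ) (e : Fin n → ℝ)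
    (hp : IsHyperbolicPoly p e d) (hpe : 0 < MvPolynomial.eval e p)
    (hreg : IsRegularCone p e) :
    ∀ e' ∈ hypConeOpen p e,
      quadCone p e' (Real.sqrt ((d : ℝ) - 1)) ⊆ hypConeClosed p e ∧
      hypConeClosed p e ⊆ quadCone p e' 1 :=
  stmt8_general hd hp
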